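/- arXiv:1207.6036 — 3 statements merged into one kernel-verified Lean document; each statement's English description precedes it below -/
import Mathlib

section
/- Let G be a group and let θ ∈ G satisfy θ² = 1. Let H be a commutative subgroup of G that allows square roots and satisfies θHθ = H. Then for every h ∈ H one can write h·θ = h_θ·θ^h, where θ^h ∈ G is H-conjugate to θ (that is, θ^h = k⁻¹θk for some k ∈ H) and h_θ ∈ H commutes with θ^h (that is, h_θ·θ^h = θ^h·h_θ). Concretely, if g ∈ H satisfies g² = h and one sets θ(x) := θxθ for x ∈ H, then θ^h := θ(g⁻¹)·θ·θ(g) and h_θ := g·θ(g) have these properties. -/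
/-! Write `t = θgθ`, an element of `H` with `θt = gθ` and `θg = tθ`. The conjugate
`t⁻¹θt` equals `t⁻¹gθ`, and since `g` and `t` commute, both products of `gt` with it are
`g²θ = hθ`. The existence claim follows by choosing a square root `g` of `h` in `H`. -/


/-- Let `G` be a group and `θ ∈ G` with `θ² = 1`. Let `H` be a commutative
subgroup of `G` allowing square roots and satisfying `θHθ = H`. Then every `h ∈ H` can be
written as `h * θ = h_θ * θ^h` with `θ^h` `H`-conjugate to `θ` and `h_θ ∈ H` commuting with
`θ^h`; concretely, if `g ∈ H` satisfies `g² = h` then `θ^h := (θg⁻¹θ) * θ * (θgθ)` and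
`h_θ := g * (θgθ)` have these properties. -/
theorem stmt_0 {G : Type*} [Group G] (θ : G) (hθ : θ ^ 2 = 1)
    (H : Subgroup G)
    (hcomm : ∀ x ∈ H, ∀ y ∈ H, x * y = y * x)
    (hsqrt : ∀ h ∈ H, ∃ g ∈ H, g ^ 2 = h)
    (hstab : ∀ x ∈ H, θ * x * θ ∈ H) :
    ∀ h ∈ H,
      (∃ hθ' ∈ H, ∃ θh : G, (∃ k ∈ H, θh = k⁻¹ * θ * k) ∧
        hθ' * θh = θh * hθ' ∧ h * θ = hθ' * θh) ∧
      (∀ g ∈ H, g ^ 2 = h →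
        g * (θ * g * θ) ∈ H ∧
        (∃ k ∈ H, (θ * g⁻¹ * θ) * θ * (θ * g * θ) = k⁻¹ * θ * k) ∧
        (g * (θ * g * θ)) * ((θ * g⁻¹ * θ) * θ * (θ * g * θ)) =
          ((θ * g⁻¹ * θ) * θ * (θ * g * θ)) * (g * (θ * g * θ)) ∧
        h * θ = (g * (θ * g * θ)) * ((θ * g⁻¹ * θ) * θ * (θ * g * θ))) := by
  have hθθ : θ * θ = 1 := by rw [← pow_two, hθ]
  have key : ∀ g ∈ H,
        g * (θ * g * θ) ∈ H ∧
        (∃ k ∈ H, (θ * g⁻¹ * θ) * θ * (θ * g * θ) = k⁻¹ * θ * k) ∧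
        (g * (θ * g * θ)) * ((θ * g⁻¹ * θ) * θ * (θ * g * θ)) =
          ((θ * g⁻¹ * θ) * θ * (θ * g * θ)) * (g * (θ * g * θ)) ∧
        g ^ 2 * θ = (g * (θ * g * θ)) * ((θ * g⁻¹ * θ) * θ * (θ * g * θ)) := by
    intro g hg
    have ht := hstab g hg
    have hgt := hcomm g hg _ ht
    have hinv : θ * g⁻¹ * θ = (θ * g * θ)⁻¹ := by
      rw [mul_inv_rev, mul_inv_rev, inv_eq_of_mul_eq_one_right hθθ, mul_assoc]
    have h1 : θ * (θ * g * θ) = g * θ := by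
      rw [← mul_assoc, ← mul_assoc, hθθ, one_mul]
    have h2 : θ * g = θ * g * θ * θ := by
      rw [mul_assoc (θ * g), hθθ, mul_one]
    rw [hinv]
    generalize θ * g * θ = t at *
    have e1 : g * t * (t⁻¹ * θ * t) = g ^ 2 * θ := by
      calc g * t * (t⁻¹ * θ * t) = g * (θ * t) := by group
        _ = g ^ 2 * θ := by rw [h1, pow_two, mul_assoc]
    have e2 : t⁻¹ * θ * t * (g * t) = g ^ 2 * θ := by
      calc t⁻¹ * θ * t * (g * t) = t⁻¹ * (θ * t) * (g * t) := by group
        _ = t⁻¹ * g * (θ * g) * t := by rw [h1]; group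
        _ = t⁻¹ * (g * t) * (θ * t) := by rw [h2]; group
        _ = g ^ 2 * θ := by rw [h1, hgt, inv_mul_cancel_left, pow_two, mul_assoc]
    exact ⟨H.mul_mem hg ht, ⟨t, ht, rfl⟩, e1.trans e2.symm, e1.symm⟩
  intro h hh
  constructor
  · obtain ⟨g, hg, rfl⟩ := hsqrt h hh
    obtain ⟨a, b, c, d⟩ := key g hg
    exact ⟨_, a, _, b, c, d⟩
  · rintro g hg rfl
    exact key g hg
end

section
/- Let I be a finite set, X ⊆ I, and τ : I → I an involution with τ(X) = X. Let I* ⊆ I∖X be a subset containing exactly one element of each τ-orbit of I∖X. Let Q be the free ℤ-module with basis (α_i)_{i∈I}, write ℤX for the ℤ-span of {α_j : j ∈ X}, and let Θ : Q → Q be a ℤ-linear map such that Θ∘Θ = id, Θ(α_j) = α_j for all j ∈ X, and Θ(α_i) + α_{τ(i)} ∈ ℤX for all i ∈ I∖X. Set Q^Θ := {β ∈ Q : Θ(β) = β}. Then Q decomposes as an internal direct sum Q = (⊕_{i∈I*} ℤα_i) ⊕ Q^Θ. -/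
/-!
For `i ∉ X` the coefficient of `α_i` in `Θ β` is minus the coefficient of `α_{τ i}` in `β`
(`theta_apply_of_notMem`). If `β` is fixed by `Θ` and supported on `I*`, then each of its
coefficients satisfies `β_i = -β_{τ i}`; either `τ i ∉ I*`, so that `β_{τ i} = 0`, or `τ i = i`, and
in both cases `β_i = 0`. This gives a zero intersection.

For the sum, the only basis vectors not obviously in it are the `α_i` with `i ∉ X ∪ I*`. Then
`τ i ∈ I*`, and `Θ α_i = -α_{τ i} + x` with `x ∈ ℤX` gives
`α_i = α_{τ i} + (α_i + Θ α_i) - x`, where the last two terms are fixed by `Θ`.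
-/

theorem mem_span_single_iff {I : Type*} (s : Set I) (β : I →₀ ℤ) :
    β ∈ Submodule.span ℤ ((fun i => Finsupp.single i (1 : ℤ)) '' s) ↔ ∀ i ∉ s, β i = 0 := by
  rw [← Finsupp.supported_eq_span_single, Finsupp.mem_supported']

/-- Outside `X`, the map `Θ` acts on coordinates as `-τ`. -/
theorem theta_apply_of_notMem {I : Type*} (X : Set I) (τ : I → I) (hτ2 : ∀ i, τ (τ i) = i)
    (hτX : τ '' X = X) (Θ : (I →₀ ℤ) →ₗ[ℤ] (I →₀ ℤ))
    (hΘX : ∀ j ∈ X, Θ (Finsupp.single j 1) = Finsupp.single j 1)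
    (hΘout : ∀ i ∈ Xᶜ, Θ (Finsupp.single i 1) + Finsupp.single (τ i) 1 ∈
        Submodule.span ℤ ((fun j => Finsupp.single j (1 : ℤ)) '' X))
    (β : I →₀ ℤ) (i : I) (hi : i ∉ X) : Θ β i = -β (τ i) := by
  classical
  have hτi : τ i ∉ X := fun h => hi (by
    rw [← hτX]
    exact ⟨τ i, h, hτ2 i⟩)
  have key : (Finsupp.lapply i : (I →₀ ℤ) →ₗ[ℤ] ℤ) ∘ₗ Θ = -Finsupp.lapply (τ i) := by
    refine Finsupp.lhom_ext' fun j => LinearMap.ext_ring ?_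
    simp only [LinearMap.comp_apply, Finsupp.lsingle_apply, Finsupp.lapply_apply,
      LinearMap.neg_apply]
    by_cases hj : j ∈ X
    · have h1 : j ≠ i := fun h => hi (h ▸ hj)
      have h2 : j ≠ τ i := fun h => hτi (h ▸ hj)
      simp [hΘX j hj, h1, h2]
    · have h := (mem_span_single_iff X _).1 (hΘout j hj) i hi
      have hiff : τ j = i ↔ j = τ i :=
        ⟨fun h => by rw [← h, hτ2], fun h => by rw [h, hτ2]⟩
      rw [Finsupp.add_apply, Finsupp.single_apply] at h
      rw [Finsupp.single_apply]
      simp only [hiff] at h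
      exact eq_neg_of_add_eq_zero_left h
  simpa using LinearMap.congr_fun key β

/-- Let `I` be a finite set, `X ⊆ I`, `τ : I → I` an involution with
`τ(X) = X`, and `I*` a subset of `I \ X` containing exactly one element of each `τ`-orbit
of `I \ X`. Let `Q = ℤ^{(I)}` with basis `(α_i)`, and let `Θ : Q → Q` be ℤ-linear with
`Θ² = id`, `Θ(α_j) = α_j` for `j ∈ X`, and `Θ(α_i) + α_{τ(i)} ∈ ℤX` for `i ∉ X`. Then
`Q` is the internal direct sum of `⊕_{i ∈ I*} ℤ α_i` and `Q^Θ = {β : Θβ = β}`. -/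
theorem stmt_4 {I : Type*} [Fintype I] [DecidableEq I]
    (X : Set I) (τ : I → I) (hτ2 : ∀ i, τ (τ i) = i) (hτX : τ '' X = X)
    (Istar : Set I) (hIstar : Istar ⊆ Xᶜ)
    (horbit : ∀ i ∈ Xᶜ, ∃! j, j ∈ Istar ∧ (j = i ∨ j = τ i))
    (Θ : (I →₀ ℤ) →ₗ[ℤ] (I →₀ ℤ))
    (hΘ2 : ∀ β, Θ (Θ β) = β)
    (hΘX : ∀ j ∈ X, Θ (Finsupp.single j 1) = Finsupp.single j 1)
    (hΘout : ∀ i ∈ Xᶜ, Θ (Finsupp.single i 1) + Finsupp.single (τ i) 1 ∈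
        Submodule.span ℤ ((fun j => Finsupp.single j (1 : ℤ)) '' X)) :
    IsCompl
      (Submodule.span ℤ ((fun i => Finsupp.single i (1 : ℤ)) '' Istar))
      (LinearMap.eqLocus Θ LinearMap.id) := by
  have hfix : ∀ x ∈ Submodule.span ℤ ((fun j => Finsupp.single j (1 : ℤ)) '' X),
      x ∈ LinearMap.eqLocus Θ LinearMap.id := by
    intro x hx
    refine Submodule.span_le.2 ?_ hx
    rintro _ ⟨j, hj, rfl⟩
    exact hΘX j hj
  constructor
  · rw [Submodule.disjoint_def]
    intro β hβ hβΘ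
    rw [mem_span_single_iff] at hβ
    have hβΘ' : Θ β = β := hβΘ
    ext i
    by_cases hi : i ∈ Istar
    · have h := theta_apply_of_notMem X τ hτ2 hτX Θ hΘX hΘout β i (hIstar hi)
      rw [hβΘ'] at h
      by_cases hti : τ i ∈ Istar
      · have : τ i = i :=
          (horbit i (hIstar hi)).unique ⟨hti, Or.inr rfl⟩ ⟨hi, Or.inl rfl⟩
        rw [this] at h
        simp only [Finsupp.coe_zero, Pi.zero_apply]
        omega
      · rw [h, hβ _ hti]
        simp
    · exact hβ i hi
  · rw [codisjoint_iff, eq_top_iff]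
    have hstar : ∀ i ∈ Istar, Finsupp.single i (1 : ℤ) ∈
        Submodule.span ℤ ((fun i => Finsupp.single i (1 : ℤ)) '' Istar) :=
      fun i hi => Submodule.subset_span ⟨i, hi, rfl⟩
    have hbasis : ∀ i, Finsupp.single i (1 : ℤ) ∈
        Submodule.span ℤ ((fun i => Finsupp.single i (1 : ℤ)) '' Istar) ⊔
          LinearMap.eqLocus Θ LinearMap.id := by
      intro i
      by_cases hX : i ∈ X
      · exact Submodule.mem_sup_right (hΘX i hX)
      obtain ⟨j, ⟨hj, rfl | rfl⟩, -⟩ := horbit i hX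
      · exact Submodule.mem_sup_left (hstar _ hj)
      · have hsum : Finsupp.single i (1 : ℤ) + Θ (Finsupp.single i 1) ∈
            LinearMap.eqLocus Θ LinearMap.id := by
          rw [LinearMap.mem_eqLocus, map_add, hΘ2, LinearMap.id_apply, add_comm]
        have hdecomp : Finsupp.single i (1 : ℤ) = Finsupp.single (τ i) 1 +
            ((Finsupp.single i 1 + Θ (Finsupp.single i 1)) -
              (Θ (Finsupp.single i 1) + Finsupp.single (τ i) 1)) := by abel
        rw [hdecomp]
        exact Submodule.add_mem_sup (hstar _ hj)
          (Submodule.sub_mem _ hsum (hfix _ (hΘout i hX)))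
    intro β _
    induction β using Finsupp.induction_linear with
    | zero => exact Submodule.zero_mem _
    | add f g hf hg => exact Submodule.add_mem _ (hf trivial) (hg trivial)
    | single i c =>
      have : Finsupp.single i c = c • Finsupp.single i (1 : ℤ) := by simp
      rw [this]
      exact Submodule.smul_mem _ c (hbasis i)
end

section
/- Let K be a field of characteristic 0, I a finite set, X ⊆ I, and Q = ℤ^I the free abelian group with standard basis (δ_i)_{i∈I}; write Q⁺ = ℕ₀^I and ℕ₀X for the submonoid generated by {δ_j : j ∈ X}. Let 𝔤 be a Lie algebra over K equipped with a Q-grading 𝔤 = ⊕_{β∈Q} 𝔤_β (so [𝔤_β, 𝔤_γ] ⊆ 𝔤_{β+γ}) such that 𝔤_β = 0 unless β ∈ Q⁺ or −β ∈ Q⁺. Set 𝔥 := 𝔤_0 and 𝔫^± := ⊕_{β∈Q⁺∖{0}} 𝔤_{±β}. Suppose given elements e_i ∈ 𝔤_{δ_i} and f_i ∈ 𝔤_{−δ_i} (i ∈ I) such that 𝔫⁺ is generated as a Lie algebra by {e_i : i ∈ I}, 𝔫⁻ is generated as a Lie algebra by {f_i : i ∈ I}, and ⊕_{β∈ℕ₀X∖{0}}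 𝔤_β is contained in the Lie subalgebra generated by {e_i : i ∈ X}. Let Θ : Q → Q be a ℤ-linear map with Θ(δ_j) = δ_j for all j ∈ X and Θ(β) ∈ −(Q⁺∖{0}) for every β ∈ Q⁺ ∖ ℕ₀X, and let θ : 𝔤 → 𝔤 be an involutive Lie algebra automorphism such that θ(𝔤_β) ⊆ 𝔤_{Θ(β)} for all β ∈ Q, and θ(e_i) = e_i, θ(f_i) = f_i for all i ∈ X. Then the fixed-point subalgebra 𝔨 = {x ∈ 𝔤 : θ(x) = x} is generated as a Lie algebra by the set {e_i, f_i : i ∈ X} ∪ {h ∈ 𝔥 : θ(h) = h} ∪ {f_i + θ(f_i) : i ∈ I∖X}. -/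
/-!
Write `𝔪` for the Lie subalgebra generated by the listed elements, `B = ⨆_{β ≥ 0} 𝔤_β`, and
`B_i = f_i` (`i ∈ X`), `B_i = f_i + θ(f_i)` (`i ∉ X`). All generators of `𝔪` are fixed by `θ`, so
only the inclusion of the fixed points in `𝔪` needs an argument.

* `𝔤 = 𝔪 + B` (`top_le_sup`). Filter `𝔤` by height. Since `θ(f_i)` has nonnegative height for
  `i ∉ X`, the element `B_i` has leading term `f_i`, and brackets of the `B_i` have as leading terms
  the corresponding brackets of the `f_i`. As the `f_i` generate `𝔫⁻`, every homogeneous element of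
  negative weight is the leading term of an element of `𝔪` (`le_leadingTerm`); subtracting leading
  terms finitely often lands in `B`.
* A fixed point in `B` lies in `𝔪`. Split it as `b₁ + b₂` with `b₁` of weights in `ℕ₀X` and `b₂` of
  the remaining nonnegative weights. The map `θ` preserves the weights of `b₁` and makes those of
  `b₂` negative, so `θ(b₂) ∈ B ∩ 𝔫⁻ = 0` and `b₂ = 0`. Finally `b₁` is the sum of an element `h` of
  `𝔤_0` and an element of the subalgebra generated by the `e_i`, `i ∈ X`, which is fixed by `θ`;
  hence `h` is fixed as well.
-/

section Helpers

variable {K I L : Type*} [Field K] [Fintype I] [LieRing L] [LieAlgebra K L]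

/-- The height `∑ i, β i` of a weight. -/
def height (β : I →₀ ℤ) : ℤ := ∑ i, β i

lemma height_add (β γ : I →₀ ℤ) : height (β + γ) = height β + height γ := by
  simp [height, Finset.sum_add_distrib]

lemma height_neg_single [DecidableEq I] (i : I) :
    height (-Finsupp.single i 1 : I →₀ ℤ) = -1 := by
  simp [height, Finsupp.single_apply]

lemma height_neg_of_nonpos {β : I →₀ ℤ} (h : ∀ i, β i ≤ 0) (h0 : β ≠ 0) : height β < 0 := by
  obtain ⟨i, hi⟩ := Finsupp.ne_iff.1 h0
  exact Finset.sum_neg' (fun i _ => h i) ⟨i, Finset.mem_univ i, lt_of_le_of_ne (h i) hi⟩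

/-- The sum of the weight spaces of height at least `c`. -/
def heightFil (g : (I →₀ ℤ) → Submodule K L) (c : ℤ) : Submodule K L :=
  ⨆ β ∈ {β : I →₀ ℤ | c ≤ height β}, g β

lemma le_heightFil (g : (I →₀ ℤ) → Submodule K L) {c : ℤ} {β : I →₀ ℤ} (h : c ≤ height β) :
    g β ≤ heightFil g c :=
  le_biSup g (show β ∈ {β : I →₀ ℤ | c ≤ height β} from h)

lemma heightFil_mono (g : (I →₀ ℤ) → Submodule K L) {c d : ℤ} (h : d ≤ c) :
    heightFil g c ≤ heightFil g d :=
  iSup₂_le fun _ hβ => le_heightFil g (h.trans hβ)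

lemma lie_mem_heightFil (g : (I →₀ ℤ) → Submodule K L)
    (hbracket : ∀ β γ : I →₀ ℤ, ∀ x ∈ g β, ∀ y ∈ g γ, ⁅x, y⁆ ∈ g (β + γ))
    {c d : ℤ} {x y : L} (hx : x ∈ heightFil g c) (hy : y ∈ heightFil g d) :
    ⁅x, y⁆ ∈ heightFil g (c + d) := by
  have h1 : heightFil g c ≤
      (heightFil g (c + d)).comap ((LieModule.toEnd K L L : L →ₗ[K] Module.End K L).flip y) := by
    refine iSup₂_le fun β hβ x hx => ?_
    have h2 : heightFil g d ≤ (heightFil g (c + d)).comap (LieModule.toEnd K L L x) := by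
      refine iSup₂_le fun γ hγ y hy => ?_
      refine le_heightFil g ?_ (hbracket β γ x hx y hy)
      rw [height_add]
      exact add_le_add hβ hγ
    exact h2 hy
  exact h1 hx

/-- The elements of `g β` that are leading terms of elements of `M`, that is, that agree with
an element of `M` up to terms of strictly larger height. -/
def leadingTerm (g : (I →₀ ℤ) → Submodule K L) (M : LieSubalgebra K L) (β : I →₀ ℤ) :
    Submodule K L :=
  g β ⊓ (M.toSubmodule ⊔ heightFil g (height β + 1))

lemma mem_leadingTerm {g : (I →₀ ℤ) → Submodule K L} {M : LieSubalgebra K L} {β : I →₀ ℤ}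
    {y : L} : y ∈ leadingTerm g M β ↔
      y ∈ g β ∧ ∃ m ∈ M, y - m ∈ heightFil g (height β + 1) := by
  rw [leadingTerm, Submodule.mem_inf, Submodule.mem_sup]
  refine and_congr_right fun _ => ⟨?_, ?_⟩
  · rintro ⟨m, hm, z, hz, rfl⟩
    exact ⟨m, hm, by simpa using hz⟩
  · rintro ⟨m, hm, hz⟩
    exact ⟨m, hm, _, hz, by simp⟩

lemma lie_mem_leadingTerm {g : (I →₀ ℤ) → Submodule K L} {M : LieSubalgebra K L}
    (hbracket : ∀ β γ : I →₀ ℤ, ∀ x ∈ g β, ∀ y ∈ g γ, ⁅x, y⁆ ∈ g (β + γ))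
    {β γ : I →₀ ℤ} {x y : L} (hx : x ∈ leadingTerm g M β) (hy : y ∈ leadingTerm g M γ) :
    ⁅x, y⁆ ∈ leadingTerm g M (β + γ) := by
  rw [mem_leadingTerm] at *
  obtain ⟨hx, m, hm, hxm⟩ := hx
  obtain ⟨hy, n, hn, hyn⟩ := hy
  refine ⟨hbracket _ _ _ hx _ hy, ⁅m, n⁆, M.lie_mem hm hn, ?_⟩
  have hm' : m ∈ heightFil g (height β) := by
    rw [← sub_sub_cancel x m]
    exact sub_mem (le_heightFil g le_rfl hx) (heightFil_mono g (by lia) hxm)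
  have e1 : ⁅x, y⁆ - ⁅m, n⁆ = ⁅x - m, y⁆ + ⁅m, y - n⁆ := by
    rw [sub_lie, lie_sub]; abel
  rw [e1, height_add]
  refine add_mem ?_ ?_
  · exact heightFil_mono g (by lia) (lie_mem_heightFil g hbracket hxm (le_heightFil g le_rfl hy))
  · exact heightFil_mono g (by lia) (lie_mem_heightFil g hbracket hm' hyn)

/-- The sum of the spaces of leading terms of `M`, as a Lie subalgebra. -/
def leadingSubalgebra (g : (I →₀ ℤ) → Submodule K L) (M : LieSubalgebra K L)
    (hbracket : ∀ β γ : I →₀ ℤ, ∀ x ∈ g β, ∀ y ∈ g γ, ⁅x, y⁆ ∈ g (β + γ)) :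
    LieSubalgebra K L where
  __ := ⨆ β, leadingTerm g M β
  lie_mem' := by
    intro x y hx hy
    change x ∈ ⨆ β, leadingTerm g M β at hx
    change y ∈ ⨆ β, leadingTerm g M β at hy
    change ⁅x, y⁆ ∈ ⨆ β, leadingTerm g M β
    have h1 : (⨆ β, leadingTerm g M β) ≤ (⨆ β, leadingTerm g M β).comap
        ((LieModule.toEnd K L L : L →ₗ[K] Module.End K L).flip y) := by
      refine iSup_le fun β x hx => ?_
      have h2 : (⨆ β, leadingTerm g M β) ≤
          (⨆ β, leadingTerm g M β).comap (LieModule.toEnd K L L x) :=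
        iSup_le fun γ y hy =>
          le_iSup (leadingTerm g M) (β + γ) (lie_mem_leadingTerm hbracket hx hy)
      exact h2 hy
    exact h1 hx

/-- For an independent family `g`, a sum of subspaces `W β ≤ g β` meets each `g β` exactly in
`W β`. -/
lemma mem_of_mem_iSup {ι : Type*} {g W : ι → Submodule K L} (hg : iSupIndep g)
    (hW : ∀ β, W β ≤ g β) {β : ι} {y : L} (hy : y ∈ g β) (hyW : y ∈ ⨆ γ, W γ) : y ∈ W β := by
  have h1 : (⨆ γ, W γ) ≤ W β ⊔ ⨆ (γ) (_ : γ ≠ β), g γ := by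
    refine iSup_le fun γ => ?_
    by_cases h : γ = β
    · subst h; exact le_sup_left
    · exact (hW γ).trans (le_sup_of_le_right (le_iSup₂_of_le γ h le_rfl))
  obtain ⟨w, hw, z, hz, hwz⟩ := Submodule.mem_sup.1 (h1 hyW)
  have hz0 : z = 0 := by
    refine Submodule.disjoint_def.1 (hg β) z ?_ hz
    rw [← add_sub_cancel_left w z, hwz]
    exact sub_mem hy (hW β hw)
  rwa [← hwz, hz0, add_zero]

/-- If each generator `f i` of the negative part is a leading term of `M`, then so is every
homogeneous element of negative weight. -/
lemma le_leadingTerm {g : (I →₀ ℤ) → Submodule K L} (hg : iSupIndep g)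
    (hbracket : ∀ β γ : I →₀ ℤ, ∀ x ∈ g β, ∀ y ∈ g γ, ⁅x, y⁆ ∈ g (β + γ))
    {f : I → L} {M : LieSubalgebra K L}
    (hfM : ∀ i, f i ∈ leadingTerm g M (-Finsupp.single i 1))
    (hnminus : ((LieSubalgebra.lieSpan K L (Set.range f) : LieSubalgebra K L) : Set L) =
      ↑(⨆ β ∈ {β : I →₀ ℤ | (∀ i, 0 ≤ β i) ∧ β ≠ 0}, g (-β)))
    {β : I →₀ ℤ} (hβ : ∀ i, β i ≤ 0) (hβ0 : β ≠ 0) : g β ≤ leadingTerm g M β := by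
  intro y hy
  refine mem_of_mem_iSup (W := leadingTerm g M) hg (fun _ => inf_le_left) hy ?_
  have h1 : LieSubalgebra.lieSpan K L (Set.range f) ≤ leadingSubalgebra g M hbracket := by
    rw [LieSubalgebra.lieSpan_le]
    rintro _ ⟨i, rfl⟩
    exact le_iSup (leadingTerm g M) _ (hfM i)
  have h2 : y ∈ (LieSubalgebra.lieSpan K L (Set.range f) : Set L) := by
    rw [hnminus]
    have h3 : -β ∈ {β : I →₀ ℤ | (∀ i, 0 ≤ β i) ∧ β ≠ 0} :=
      ⟨fun i => by simpa using hβ i, neg_ne_zero.2 hβ0⟩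
    refine le_biSup (fun β => g (-β)) h3 ?_
    simpa using hy
  exact h1 h2

/-- The decomposition `𝔤 = 𝔪 + ⨆_{β ≥ 0} 𝔤_β`, by descending the height filtration. -/
lemma top_le_sup {g : (I →₀ ℤ) → Submodule K L} (htop : iSup g = ⊤)
    (hsupp : ∀ β : I →₀ ℤ, ¬ ((∀ i, 0 ≤ β i) ∨ (∀ i, β i ≤ 0)) → g β = ⊥)
    {M : LieSubalgebra K L}
    (hM : ∀ β : I →₀ ℤ, (∀ i, β i ≤ 0) → β ≠ 0 → g β ≤ leadingTerm g M β) :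
    ⊤ ≤ M.toSubmodule ⊔ ⨆ β ∈ {β : I →₀ ℤ | ∀ i, 0 ≤ β i}, g β := by
  set B : Submodule K L := ⨆ β ∈ {β : I →₀ ℤ | ∀ i, 0 ≤ β i}, g β
  have cases_weight : ∀ β : I →₀ ℤ, g β ≤ M.toSubmodule ⊔ B ∨ ((∀ i, β i ≤ 0) ∧ β ≠ 0) := by
    intro β
    by_cases h1 : ∀ i, 0 ≤ β i
    · exact .inl ((le_biSup g (show β ∈ {β : I →₀ ℤ | ∀ i, 0 ≤ β i} from h1)).trans le_sup_right)
    by_cases h2 : ∀ i, β i ≤ 0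
    · exact .inr ⟨h2, fun h => h1 (by simp [h])⟩
    · left
      rw [hsupp β (by tauto)]
      exact bot_le
  have key : ∀ n : ℕ, heightFil g (-n) ≤ M.toSubmodule ⊔ B := by
    intro n
    induction n with
    | zero =>
      refine iSup₂_le fun β hβ => (cases_weight β).resolve_right fun h => ?_
      have := height_neg_of_nonpos h.1 h.2
      simp only [Set.mem_ofPred_eq] at hβ
      lia
    | succ n ih =>
      refine iSup₂_le fun β hβ => (cases_weight β).elim id fun h => ?_
      simp only [Set.mem_ofPred_eq] at hβ
      refine (hM β h.1 h.2).trans (inf_le_right.trans (sup_le le_sup_left ?_))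
      exact (heightFil_mono g (by push_cast at hβ; lia)).trans ih
  rw [← htop]
  exact iSup_le fun β => (le_heightFil g (c := -((-height β).toNat : ℤ)) (by lia)).trans (key _)

lemma map_eq_self_of_support {X : Set I} {Θ : (I →₀ ℤ) →ₗ[ℤ] (I →₀ ℤ)}
    (hΘX : ∀ j ∈ X, Θ (Finsupp.single j 1) = Finsupp.single j 1)
    {β : I →₀ ℤ} (hβ : ∀ i ∉ X, β i = 0) : Θ β = β := by
  have h : ∀ i, Θ (Finsupp.single i (β i)) = Finsupp.single i (β i) := by
    intro i
    by_cases hi : i ∈ X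
    · rw [← mul_one (β i), ← smul_eq_mul, ← Finsupp.smul_single, map_smul, hΘX i hi]
    · simp [hβ i hi]
  conv_lhs => rw [← Finsupp.univ_sum_single β]
  conv_rhs => rw [← Finsupp.univ_sum_single β]
  rw [map_sum]
  exact Finset.sum_congr rfl fun i _ => h i

end Helpers


/-- Let `𝔤` be a Lie algebra over a field `K` of characteristic `0`, graded
by the free abelian group `Q = ℤ^{(I)}` with support in `Q⁺ ∪ (-Q⁺)`. Suppose given
`e_i ∈ 𝔤_{δ_i}` and `f_i ∈ 𝔤_{-δ_i}` generating `𝔫⁺ = ⊕_{β ∈ Q⁺∖{0}} 𝔤_β` and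
`𝔫⁻ = ⊕_{β ∈ Q⁺∖{0}} 𝔤_{-β}` respectively, with `⊕_{β ∈ ℕ₀X∖{0}} 𝔤_β` contained in the
Lie subalgebra generated by `{e_i : i ∈ X}`. Let `Θ : Q → Q` be ℤ-linear fixing `δ_j`
(`j ∈ X`) and sending `Q⁺ ∖ ℕ₀X` into `-(Q⁺∖{0})`, and let `θ` be an involutive Lie algebra
automorphism with `θ(𝔤_β) ⊆ 𝔤_{Θβ}`, fixing `e_i, f_i` for `i ∈ X`. Then the fixed-point
subalgebra `𝔨 = {x : θx = x}` is generated as a Lie algebra by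
`{e_i, f_i : i ∈ X} ∪ {h ∈ 𝔤_0 : θh = h} ∪ {f_i + θ(f_i) : i ∉ X}`. -/
theorem stmt_10 {K : Type*} [Field K] [CharZero K]
    {I : Type*} [Fintype I] [DecidableEq I]
    (X : Set I)
    {L : Type*} [LieRing L] [LieAlgebra K L]
    (g : (I →₀ ℤ) → Submodule K L)
    (hinternal : DirectSum.IsInternal g)
    (hbracket : ∀ β γ : I →₀ ℤ, ∀ x ∈ g β, ∀ y ∈ g γ, ⁅x, y⁆ ∈ g (β + γ))
    (hsupp : ∀ β : I →₀ ℤ, ¬ ((∀ i, 0 ≤ β i) ∨ (∀ i, β i ≤ 0)) → g β = ⊥)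
    (e f : I → L)
    (he : ∀ i, e i ∈ g (Finsupp.single i 1))
    (hf : ∀ i, f i ∈ g (-Finsupp.single i 1))
    (hnplus : ((LieSubalgebra.lieSpan K L (Set.range e) : LieSubalgebra K L) : Set L) =
      ↑(⨆ β ∈ {β : I →₀ ℤ | (∀ i, 0 ≤ β i) ∧ β ≠ 0}, g β))
    (hnminus : ((LieSubalgebra.lieSpan K L (Set.range f) : LieSubalgebra K L) : Set L) =
      ↑(⨆ β ∈ {β : I →₀ ℤ | (∀ i, 0 ≤ β i) ∧ β ≠ 0}, g (-β)))
    (hXgen :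
      (↑(⨆ β ∈ {β : I →₀ ℤ | (∀ i, 0 ≤ β i) ∧ (∀ i ∉ X, β i = 0) ∧ β ≠ 0}, g β) : Set L) ⊆
        ↑(LieSubalgebra.lieSpan K L (e '' X)))
    (Θ : (I →₀ ℤ) →ₗ[ℤ] (I →₀ ℤ))
    (hΘX : ∀ j ∈ X, Θ (Finsupp.single j 1) = Finsupp.single j 1)
    (hΘneg : ∀ β : I →₀ ℤ, (∀ i, 0 ≤ β i) → ¬ (∀ i ∉ X, β i = 0) →
      ((∀ i, (Θ β) i ≤ 0) ∧ Θ β ≠ 0))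
    (θ : L →ₗ⁅K⁆ L)
    (hθ2 : ∀ x, θ (θ x) = x)
    (hθg : ∀ β : I →₀ ℤ, ∀ x ∈ g β, θ x ∈ g (Θ β))
    (hθe : ∀ i ∈ X, θ (e i) = e i)
    (hθf : ∀ i ∈ X, θ (f i) = f i) :
    {x : L | θ x = x} =
      ↑(LieSubalgebra.lieSpan K L
        ((e '' X) ∪ (f '' X) ∪ {h : L | h ∈ g 0 ∧ θ h = h} ∪
          ((fun i => f i + θ (f i)) '' Xᶜ))) := by
  set M : LieSubalgebra K L := LieSubalgebra.lieSpan K L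
        ((e '' X) ∪ (f '' X) ∪ {h : L | h ∈ g 0 ∧ θ h = h} ∪
          ((fun i => f i + θ (f i)) '' Xᶜ)) with hMdef
  have hgen : ((e '' X) ∪ (f '' X) ∪ {h : L | h ∈ g 0 ∧ θ h = h} ∪
          ((fun i => f i + θ (f i)) '' Xᶜ)) ⊆ (M : Set L) := LieSubalgebra.subset_lieSpan
  have hMfix : ∀ m ∈ M, θ m = m := by
    let F : LieSubalgebra K L :=
      { LinearMap.eqLocus (θ : L →ₗ[K] L) LinearMap.id with
        lie_mem' := fun {x y} (hx : θ x = x) (hy : θ y = y) => by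
          change θ ⁅x, y⁆ = ⁅x, y⁆
          rw [LieHom.map_lie, hx, hy] }
    have h : M ≤ F := by
      rw [hMdef, LieSubalgebra.lieSpan_le]
      rintro _ (((⟨i, hi, rfl⟩ | ⟨i, hi, rfl⟩) | h) | ⟨i, hi, rfl⟩)
      · exact hθe i hi
      · exact hθf i hi
      · exact h.2
      · change θ (f i + θ (f i)) = f i + θ (f i)
        rw [map_add, hθ2, add_comm]
    exact fun m hm => h hm
  have hind := hinternal.submodule_iSupIndep
  have hfM : ∀ i, f i ∈ leadingTerm g M (-Finsupp.single i 1) := by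
    intro i
    rw [mem_leadingTerm]
    refine ⟨hf i, ?_⟩
    by_cases hi : i ∈ X
    · exact ⟨f i, hgen (.inl (.inl (.inr ⟨i, hi, rfl⟩))), by simp⟩
    · refine ⟨f i + θ (f i), hgen (.inr ⟨i, hi, rfl⟩), ?_⟩
      rw [sub_add_cancel_left]
      refine neg_mem (le_heightFil g ?_ (hθg _ _ (hf i)))
      have hΘ := (hΘneg (Finsupp.single i 1)
        (fun j => by rw [Finsupp.single_apply]; split_ifs <;> simp)
        (fun h => by simpa using h i hi)).1
      rw [height_neg_single, neg_add_cancel, map_neg]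
      exact Finset.sum_nonneg fun j _ => by simpa using hΘ j
  have htop := top_le_sup hinternal.submodule_iSup_eq_top hsupp
    (M := M) fun β h h0 => le_leadingTerm hind hbracket hfM hnminus h h0
  refine Set.Subset.antisymm (fun x hx => ?_) hMfix
  obtain ⟨m, hm, b, hb, rfl⟩ := Submodule.mem_sup.1 (htop (Submodule.mem_top (x := x)))
  refine add_mem (S := LieSubalgebra K L) hm ?_
  have hbfix : θ b = b := by
    have h_fix : θ (m + b) = m + b := hx
    rwa [map_add, hMfix m hm, add_right_inj] at h_fix
  -- Split `b` by weights: `B₁` collects the weights in `ℕ₀X`, `B₂` the other nonnegative ones.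
  set B₁ : Submodule K L := ⨆ β ∈ {β : I →₀ ℤ | (∀ i, 0 ≤ β i) ∧ (∀ i ∉ X, β i = 0)}, g β
    with hB₁
  set B₂ : Submodule K L := ⨆ β ∈ {β : I →₀ ℤ | (∀ i, 0 ≤ β i) ∧ ¬ (∀ i ∉ X, β i = 0)}, g β
    with hB₂
  set B : Submodule K L := ⨆ β ∈ {β : I →₀ ℤ | ∀ i, 0 ≤ β i}, g β with hB
  have hB12 : B ≤ B₁ ⊔ B₂ := by
    refine iSup₂_le fun β hβ => ?_
    by_cases h : ∀ i ∉ X, β i = 0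
    · exact le_sup_of_le_left (le_iSup₂_of_le β ⟨hβ, h⟩ le_rfl)
    · exact le_sup_of_le_right (le_iSup₂_of_le β ⟨hβ, h⟩ le_rfl)
  have hB1B : B₁ ≤ B := iSup₂_le fun β hβ => le_iSup₂_of_le β hβ.1 le_rfl
  have hθB₁ : B₁ ≤ B.comap (θ : L →ₗ[K] L) := by
    refine iSup₂_le fun β hβ y hy => ?_
    have := hθg β y hy
    rw [map_eq_self_of_support hΘX hβ.2] at this
    exact le_biSup g (show β ∈ {β : I →₀ ℤ | ∀ i, 0 ≤ β i} from hβ.1) this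
  have hθB₂ : B₂ ≤ (⨆ β ∈ {β : I →₀ ℤ | (∀ i, β i ≤ 0) ∧ β ≠ 0}, g β).comap
      (θ : L →ₗ[K] L) := by
    refine iSup₂_le fun β hβ y hy => ?_
    exact le_biSup g (show Θ β ∈ {β : I →₀ ℤ | (∀ i, β i ≤ 0) ∧ β ≠ 0} from
      hΘneg β hβ.1 hβ.2) (hθg β y hy)
  have hdisj : Disjoint B (⨆ β ∈ {β : I →₀ ℤ | (∀ i, β i ≤ 0) ∧ β ≠ 0}, g β) := by
    refine hind.disjoint_biSup_biSup (Set.disjoint_left.2 fun β h1 h2 => h2.2 ?_)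
    ext i
    exact le_antisymm (h2.1 i) (h1 i)
  obtain ⟨b₁, hb₁, b₂, hb₂, rfl⟩ := Submodule.mem_sup.1 (hB12 hb)
  have hb₂0 : b₂ = 0 := by
    have h0 : θ b₂ = 0 := by
      refine Submodule.disjoint_def.1 hdisj _ ?_ (hθB₂ hb₂)
      have h1 : θ b₂ = (b₁ + b₂) - θ b₁ := by rw [eq_sub_iff_add_eq', ← map_add, hbfix]
      rw [h1]
      exact sub_mem hb (hθB₁ hb₁)
    rw [← hθ2 b₂, h0, map_zero]
  subst hb₂0
  rw [add_zero] at hbfix ⊢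
  have hB₁0 : B₁ ≤ g 0 ⊔
      ⨆ β ∈ {β : I →₀ ℤ | (∀ i, 0 ≤ β i) ∧ (∀ i ∉ X, β i = 0) ∧ β ≠ 0}, g β := by
    refine iSup₂_le fun β hβ => ?_
    by_cases h : β = 0
    · subst h; exact le_sup_left
    · exact le_sup_of_le_right (le_iSup₂_of_le β ⟨hβ.1, hβ.2, h⟩ le_rfl)
  obtain ⟨h, hh, n, hn, rfl⟩ := Submodule.mem_sup.1 (hB₁0 hb₁)
  have hnM : n ∈ M := by
    have h1 : LieSubalgebra.lieSpan K L (e '' X) ≤ M :=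
      LieSubalgebra.lieSpan_le.2 fun y hy => hgen (.inl (.inl (.inl hy)))
    exact h1 (hXgen hn)
  rw [map_add, hMfix n hnM, add_left_inj] at hbfix
  exact add_mem (S := LieSubalgebra K L) (hgen (.inl (.inr ⟨hh, hbfix⟩))) hnM
end
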